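/- There exists a universal constant C > 0 such that the following holds. Let n ≥ 1, let K, T ⊆ ℝⁿ be convex bodies containing the origin in their interior, and let Γ be a random n×n matrix whose entries are independent standard Gaussian random variables. Then E‖Γ: K → T‖ ≤ C·√n·(R(K)·M(T) + R(T°)·M(K°)). -/

import Mathlib

/-!
The operator norm `‖Γ : K → T‖` is the supremum of the Gaussian process `⟨y, Γ x⟩` over `x ∈ K` and
`y ∈ T°`. With `R₁ = R(K)` and `R₂ = R(T°)`, the increments of this process satisfy
`‖y ⊗ x - y' ⊗ x'‖ ≤ R₁ ‖y - y'‖ + R₂ ‖x - x'‖`, so they are dominated by those of the process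
`2 R₁ ⟨y, g⟩ + 2 R₂ ⟨x, h⟩`, where `g` and `h` are independent standard Gaussian vectors. By the
Sudakov–Fernique comparison, `E ‖Γ : K → T‖ ≤ 2 R₁ E ‖g‖_T + 2 R₂ E ‖h‖_{K°}`. In polar coordinates,
`E ‖g‖_T = E |g| M(T) ≤ √n M(T)`, and likewise for `K°`; this gives the constant `C = 2`.

The comparison is proved for the soft maximum `β⁻¹ log ∑ exp (β zᵢ)` of finitely many variables
(`integral_softMax_le`): the expected soft maximum is monotone along the path
`cos t • aᵢ + sin t • bᵢ`, its derivative being computed by Gaussian integration by parts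
(`gaussian_integration_by_parts`, `integral_gibbs_inner`). Finite `ε`-nets of `K` and `T°` reduce the
operator norm to this finite case (`mapNorm_le_of_nets`), and `ε → 0`, `β → ∞` gives
`integral_mapNorm_le`. The passage to spherical means is `integral_stdGaussian_le_of_homogeneous`.
-/

open MeasureTheory Real Pointwise RealInnerProductSpace
open scoped ENNReal

noncomputable section

/-- A convex body: a compact convex set with non-empty interior. -/
def IsConvexBody {n : ℕ} (K : Set (EuclideanSpace ℝ (Fin n))) : Prop :=
  IsCompact K ∧ Convex ℝ K ∧ (interior K).Nonempty

/-- The uniform probability measure on a set `K`. -/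
def unifOn {n : ℕ} (K : Set (EuclideanSpace ℝ (Fin n))) : Measure (EuclideanSpace ℝ (Fin n)) :=
  (volume K)⁻¹ • volume.restrict K

/-- A probability measure `μ` on `ℝⁿ` is isotropic: its barycenter vanishes and its
covariance matrix is the identity. -/
def IsIsotropicMeasure {n : ℕ} (μ : Measure (EuclideanSpace ℝ (Fin n))) : Prop :=
  (∀ i, ∫ x, x i ∂μ = 0) ∧ ∀ i j, ∫ x, x i * x j ∂μ = if i = j then 1 else 0

/-- A convex body is in isotropic position if the uniform probability measure on it
is isotropic. -/
def IsIsotropicBody {n : ℕ} (K : Set (EuclideanSpace ℝ (Fin n))) : Prop :=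
  IsIsotropicMeasure (unifOn K)

/-- A log-concave density: nonnegative, and multiplicatively convex. This is equivalent to:
`{p > 0}` is convex and `log (1/p)` is convex on it. -/
def IsLogConcaveDensity {n : ℕ} (p : EuclideanSpace ℝ (Fin n) → ℝ) : Prop :=
  (∀ x, 0 ≤ p x) ∧ ∀ x y : EuclideanSpace ℝ (Fin n), ∀ t : ℝ, 0 ≤ t → t ≤ 1 →
    p x ^ t * p y ^ (1 - t) ≤ p (t • x + (1 - t) • y)

/-- A measure on `ℝⁿ` is log-concave if it has a log-concave density w.r.t. Lebesgue. -/
def IsLogConcaveMeasure {n : ℕ} (μ : Measure (EuclideanSpace ℝ (Fin n))) : Prop :=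
  ∃ p : EuclideanSpace ℝ (Fin n) → ℝ, Measurable p ∧ IsLogConcaveDensity p ∧
    μ = volume.withDensity fun x => ENNReal.ofReal (p x)

/-- The standard Gaussian probability measure on `ℝⁿ`. -/
def stdGaussian (n : ℕ) : Measure (EuclideanSpace ℝ (Fin n)) :=
  volume.withDensity fun x => ENNReal.ofReal ((2 * π) ^ (-(n : ℝ) / 2) * Real.exp (-‖x‖ ^ 2 / 2))

/-- The Poincaré constant of a measure: the least `A ≥ 0` such that
`Var f ≤ A ⬝ E |∇ f|²` for all locally Lipschitz `f`. -/
def poincareConst {n : ℕ} (μ : Measure (EuclideanSpace ℝ (Fin n))) : ℝ :=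
  sInf {A : ℝ | 0 ≤ A ∧ ∀ f : EuclideanSpace ℝ (Fin n) → ℝ, LocallyLipschitz f →
    ∫ x, (f x - ∫ y, f y ∂μ) ^ 2 ∂μ ≤ A * ∫ x, ‖gradient f x‖ ^ 2 ∂μ}

/-- The KLS constant `ψₙ`. -/
def KLSConst (n : ℕ) : ℝ :=
  sSup {s : ℝ | ∃ μ : Measure (EuclideanSpace ℝ (Fin n)), IsProbabilityMeasure μ ∧
    IsLogConcaveMeasure μ ∧ IsIsotropicMeasure μ ∧ s = Real.sqrt (poincareConst μ)}

/-- The Hilbert-Schmidt norm of a matrix. -/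
def hsNorm {n : ℕ} (M : Matrix (Fin n) (Fin n) ℝ) : ℝ :=
  Real.sqrt (∑ i, ∑ j, (M i j) ^ 2)

/-- The coefficient `κₙ`, the supremum of `‖E [X₁ (X ⊗ X)]‖_HS` over all isotropic
log-concave random vectors `X` in `ℝⁿ`. -/
def kappaConst (n : ℕ) : ℝ :=
  sSup {s : ℝ | ∃ μ : Measure (EuclideanSpace ℝ (Fin n)), IsProbabilityMeasure μ ∧
    IsLogConcaveMeasure μ ∧ IsIsotropicMeasure μ ∧ ∃ h : 0 < n,
    s = hsNorm (Matrix.of fun i j => ∫ x, x ⟨0, h⟩ * (x i * x j) ∂μ)}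

/-- A gauge function on `ℝⁿ`: non-negative, convex, positively homogeneous. -/
def IsGauge {n : ℕ} (f : EuclideanSpace ℝ (Fin n) → ℝ) : Prop :=
  (∀ x, 0 ≤ f x) ∧ ConvexOn ℝ Set.univ f ∧
    ∀ (c : ℝ), 0 ≤ c → ∀ x, f (c • x) = c * f x

/-- `M(K)`: the mean of the Minkowski functional of `K` over the unit sphere, w.r.t. the
uniform probability measure on the sphere. -/
def Mparam (n : ℕ) (K : Set (EuclideanSpace ℝ (Fin n))) : ℝ :=
  ∫ x : Metric.sphere (0 : EuclideanSpace ℝ (Fin n)) 1,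
    gauge K x ∂(((volume : Measure (EuclideanSpace ℝ (Fin n))).toSphere Set.univ)⁻¹ •
      (volume : Measure (EuclideanSpace ℝ (Fin n))).toSphere)

/-- The polar body. -/
def polarBody {n : ℕ} (K : Set (EuclideanSpace ℝ (Fin n))) : Set (EuclideanSpace ℝ (Fin n)) :=
  {x | ∀ y ∈ K, ⟪x, y⟫ ≤ 1}

/-- `R(K)`: the maximal Euclidean norm of a point of `K`. -/
def Rparam {n : ℕ} (K : Set (EuclideanSpace ℝ (Fin n))) : ℝ :=
  sSup {r : ℝ | ∃ x ∈ K, r = ‖x‖}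

/-- The operator norm `‖A : K → T‖ = sup_{x ≠ 0} ‖Ax‖_T / ‖x‖_K` (Minkowski functionals). -/
def mapNorm {n : ℕ} (K T : Set (EuclideanSpace ℝ (Fin n)))
    (A : Matrix (Fin n) (Fin n) ℝ) : ℝ :=
  sSup {r : ℝ | ∃ x : EuclideanSpace ℝ (Fin n), x ≠ 0 ∧
    r = gauge T (Matrix.toEuclideanLin A x) / gauge K x}

/-- The ℓ₂ operator norm of a matrix. -/
def matOpNorm {n : ℕ} (M : Matrix (Fin n) (Fin n) ℝ) : ℝ :=
  ‖LinearMap.toContinuousLinearMap (Matrix.toEuclideanLin M)‖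

/-- The law of a random `n × n` matrix whose entries are independent standard Gaussians. -/
def gaussianMatrixMeasure (n : ℕ) : Measure (Fin n → Fin n → ℝ) :=
  volume.withDensity fun A =>
    ENNReal.ofReal ((2 * π) ^ (-(n ^ 2 : ℝ) / 2) * Real.exp (-(∑ i, ∑ j, (A i j) ^ 2) / 2))

set_option linter.unusedSectionVars false

/-! ### Standard Gaussian measures -/

/-- The density of the standard Gaussian measure on a Euclidean space. -/
def gaussDensity (E : Type*) [NormedAddCommGroup E] [InnerProductSpace ℝ E] (x : E) : ℝ :=
  (2 * π) ^ (-(Module.finrank ℝ E : ℝ) / 2) * Real.exp (-‖x‖ ^ 2 / 2)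

section Gaussian

variable {E : Type*} [NormedAddCommGroup E] [InnerProductSpace ℝ E] [FiniteDimensional ℝ E]
  [MeasurableSpace E] [BorelSpace E]

lemma gaussDensity_nonneg (x : E) : 0 ≤ gaussDensity E x := by
  unfold gaussDensity; positivity

lemma continuous_gaussDensity : Continuous (gaussDensity E) := by
  unfold gaussDensity; fun_prop

lemma integrable_gaussDensity : Integrable (gaussDensity E) := by
  have h := (GaussianFourier.integrable_cexp_neg_mul_sq_norm_add (V := E) (b := 1 / 2)
    (by norm_num) 0 0).re
  refine (h.const_mul ((2 * π) ^ (-(Module.finrank ℝ E : ℝ) / 2))).congr (.of_forall fun x => ?_)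
  simp only [gaussDensity]
  congr 1
  have : (-(1 / 2) * (‖x‖ : ℂ) ^ 2 + 0 * ((inner ℝ 0 x : ℝ) : ℂ)) = ((-‖x‖ ^ 2 / 2 : ℝ) : ℂ) := by
    push_cast; ring
  rw [this, ← Complex.ofReal_exp]
  exact Complex.ofReal_re _

/-- Both sides have the same characteristic function. -/
lemma withDensity_gaussDensity :
    volume.withDensity (fun x : E => ENNReal.ofReal (gaussDensity E x)) =
      ProbabilityTheory.stdGaussian E := by
  have : IsFiniteMeasure (volume.withDensity (fun x : E => ENNReal.ofReal (gaussDensity E x))) :=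
    isFiniteMeasure_withDensity_ofReal integrable_gaussDensity.2
  refine Measure.ext_of_charFun ?_
  ext t
  rw [ProbabilityTheory.charFun_stdGaussian, charFun_apply,
    integral_withDensity_eq_integral_toReal_smul
      (continuous_gaussDensity.measurable.ennreal_ofReal) (.of_forall fun x => by simp)]
  have key := GaussianFourier.integral_cexp_neg_mul_sq_norm_add (V := E) (b := 1 / 2)
    (by norm_num) Complex.I t
  have hpt : ∀ x : E, (ENNReal.ofReal (gaussDensity E x)).toReal •
      Complex.exp (((inner ℝ x t : ℝ) : ℂ) * Complex.I) =
      (((2 * π) ^ (-(Module.finrank ℝ E : ℝ) / 2) : ℝ) : ℂ) *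
        Complex.exp (-(1 / 2) * (‖x‖ : ℂ) ^ 2 + Complex.I * ((inner ℝ t x : ℝ) : ℂ)) := by
    intro x
    rw [ENNReal.toReal_ofReal (gaussDensity_nonneg x), gaussDensity, Complex.real_smul,
      Complex.exp_add, real_inner_comm]
    push_cast
    rw [mul_assoc]
    congr 3
    · ring_nf
    · ring_nf
  simp_rw [hpt]
  rw [integral_const_mul, key, ← mul_assoc]
  have h1 : (((2 * π) ^ (-(Module.finrank ℝ E : ℝ) / 2) : ℝ) : ℂ) *
      ((π : ℂ) / (1 / 2)) ^ ((Module.finrank ℝ E : ℂ) / 2) = 1 := by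
    have : ((π : ℂ) / (1 / 2)) ^ ((Module.finrank ℝ E : ℂ) / 2) =
        (((2 * π) ^ ((Module.finrank ℝ E : ℝ) / 2) : ℝ) : ℂ) := by
      rw [Complex.ofReal_cpow (by positivity)]
      push_cast
      congr 1
      ring
    rw [this, ← Complex.ofReal_mul, ← Real.rpow_add (by positivity)]
    simp [neg_div]
  rw [h1, one_mul, Complex.I_sq]
  congr 1
  ring

lemma integral_stdGaussian (f : E → ℝ) :
    ∫ x, f x ∂(ProbabilityTheory.stdGaussian E) = ∫ x, gaussDensity E x * f x := by
  rw [← withDensity_gaussDensity, integral_withDensity_eq_integral_toReal_smul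
      (continuous_gaussDensity.measurable.ennreal_ofReal) (.of_forall fun x => by simp)]
  refine integral_congr_ae (.of_forall fun x => ?_)
  simp [ENNReal.toReal_ofReal (gaussDensity_nonneg x)]

lemma integrable_stdGaussian_iff (f : E → ℝ) :
    Integrable f (ProbabilityTheory.stdGaussian E) ↔
      Integrable (fun x => gaussDensity E x * f x) := by
  rw [← withDensity_gaussDensity, integrable_withDensity_iff_integrable_smul'
      (continuous_gaussDensity.measurable.ennreal_ofReal) (.of_forall fun x => by simp)]
  refine integrable_congr (.of_forall fun x => ?_)
  simp [ENNReal.toReal_ofReal (gaussDensity_nonneg x)]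

lemma integrable_norm_stdGaussian :
    Integrable (fun x : E => ‖x‖) (ProbabilityTheory.stdGaussian E) :=
  ProbabilityTheory.IsGaussian.integrable_id.norm

/-- Continuous functions of linear growth are Gaussian integrable. -/
lemma integrable_of_linear_growth {f : E → ℝ} (hf : Continuous f) {C D : ℝ}
    (hb : ∀ x, |f x| ≤ C + D * ‖x‖) : Integrable f (ProbabilityTheory.stdGaussian E) :=
  ((integrable_const C).add (integrable_norm_stdGaussian.const_mul D)).mono'
    hf.aestronglyMeasurable (.of_forall hb)

/-- Gaussian integration by parts, `E ⟨v, G⟩ f(G) = E ∂ᵥ f(G)`. -/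
lemma gaussian_integration_by_parts {f f' : E → ℝ} (v : E) (hf : Continuous f)
    (hf' : Continuous f') {C C' : ℝ} (hC : ∀ x, |f x| ≤ C) (hC' : ∀ x, |f' x| ≤ C')
    (hd : ∀ x, HasLineDerivAt ℝ f (f' x) x v) :
    ∫ x, inner ℝ v x * f x ∂(ProbabilityTheory.stdGaussian E) =
      ∫ x, f' x ∂(ProbabilityTheory.stdGaussian E) := by
  have hρ : ∀ x : E, HasLineDerivAt ℝ (gaussDensity E) (-(inner ℝ v x * gaussDensity E x)) x v := by
    intro x
    unfold HasLineDerivAt gaussDensity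
    have h1 : HasDerivAt (fun t : ℝ => x + t • v) v 0 := by
      simpa using ((hasDerivAt_id (0 : ℝ)).smul_const v).const_add x
    have h2 := ((h1.norm_sq.neg.div_const 2).exp).const_mul
      ((2 * π) ^ (-(Module.finrank ℝ E : ℝ) / 2))
    refine HasDerivAt.congr_deriv (f := fun t : ℝ =>
      (2 * π) ^ (-(Module.finrank ℝ E : ℝ) / 2) * Real.exp (-‖x + t • v‖ ^ 2 / 2)) h2 ?_
    simp only [zero_smul, add_zero, Pi.neg_apply]
    rw [real_inner_comm]
    ring
  have hI1 : Integrable (fun x => inner ℝ v x * f x) (ProbabilityTheory.stdGaussian E) := by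
    refine integrable_of_linear_growth (C := 0) (D := ‖v‖ * C) (by fun_prop) fun x => ?_
    rw [abs_mul, zero_add]
    calc |inner ℝ v x| * |f x| ≤ (‖v‖ * ‖x‖) * C :=
          mul_le_mul (abs_real_inner_le_norm v x) (hC x) (abs_nonneg _) (by positivity)
      _ = _ := by ring
  have hI2 : Integrable f' (ProbabilityTheory.stdGaussian E) :=
    integrable_of_linear_growth (C := C') (D := 0) hf' (by simpa using hC')
  have hI3 : Integrable f (ProbabilityTheory.stdGaussian E) :=
    integrable_of_linear_growth (C := C) (D := 0) hf (by simpa using hC)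
  rw [integrable_stdGaussian_iff] at hI1 hI2 hI3
  have := integral_bilinear_hasLineDerivAt_right_eq_neg_left_of_integrable
    (μ := (volume : Measure E)) (f := gaussDensity E)
    (f' := fun x => -(inner ℝ v x * gaussDensity E x)) (g := f) (g' := f') (v := v)
    (B := ContinuousLinearMap.mul ℝ ℝ) (by
      refine hI1.neg.congr (.of_forall fun x => ?_)
      simp; ring) (by simpa using hI2) (by simpa using hI3)
    (fun x _ => hρ x) (fun x _ => hd x)
  simp only [ContinuousLinearMap.mul_apply'] at this
  rw [integral_stdGaussian, integral_stdGaussian, this, ← integral_neg]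
  refine integral_congr_ae (.of_forall fun x => ?_)
  simp; ring

/-- The image of a standard Gaussian vector under the adjoint of an isometric embedding is again
standard Gaussian. -/
lemma stdGaussian_map_adjoint {F : Type*} [NormedAddCommGroup F] [InnerProductSpace ℝ F]
    [FiniteDimensional ℝ F] [MeasurableSpace F] [BorelSpace F] (J : F →L[ℝ] E) (L : E →L[ℝ] F)
    (hJ : ∀ y, ‖J y‖ = ‖y‖) (hL : ∀ x y, inner ℝ (L x) y = inner ℝ x (J y)) :
    (ProbabilityTheory.stdGaussian E).map L = ProbabilityTheory.stdGaussian F := by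
  have : IsProbabilityMeasure ((ProbabilityTheory.stdGaussian E).map L) :=
    Measure.isProbabilityMeasure_map L.continuous.aemeasurable
  refine Measure.ext_of_charFun ?_
  ext t
  rw [ProbabilityTheory.charFun_stdGaussian, charFun_apply,
    integral_map L.continuous.aemeasurable (Continuous.aestronglyMeasurable (by fun_prop))]
  simp_rw [hL]
  rw [← charFun_apply, ProbabilityTheory.charFun_stdGaussian, hJ]

lemma integral_norm_stdGaussian_le :
    ∫ x, ‖x‖ ∂(ProbabilityTheory.stdGaussian E) ≤ Real.sqrt (Module.finrank ℝ E) := by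
  have hsq : ∫ x, ‖x‖ ^ 2 ∂(ProbabilityTheory.stdGaussian E) = Module.finrank ℝ E := by
    have hm (i) : MemLp (innerSL ℝ (stdOrthonormalBasis ℝ E i)) 2
        (ProbabilityTheory.stdGaussian E) :=
      ProbabilityTheory.IsGaussian.memLp_dual _ _ 2 (by norm_num)
    have h1 (i) : ∫ x, (innerSL ℝ (stdOrthonormalBasis ℝ E i) x) ^ 2
        ∂(ProbabilityTheory.stdGaussian E) = 1 := by
      have h := ProbabilityTheory.variance_dual_stdGaussian
        (innerSL ℝ (stdOrthonormalBasis ℝ E i))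
      rw [ProbabilityTheory.variance_of_integral_eq_zero (hm i).aestronglyMeasurable.aemeasurable
        (ProbabilityTheory.integral_strongDual_stdGaussian _), innerSL_apply_norm] at h
      simpa using h
    have h2 (x : E) : ‖x‖ ^ 2 = ∑ i, (innerSL ℝ (stdOrthonormalBasis ℝ E i) x) ^ 2 := by
      simpa using ((stdOrthonormalBasis ℝ E).sum_sq_inner_right x).symm
    simp_rw [h2]
    rw [integral_finsetSum _ fun i _ => (hm i).integrable_sq]
    simp_rw [h1]
    simp
  have hmem : MemLp (fun x : E => ‖x‖) 2 (ProbabilityTheory.stdGaussian E) :=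
    ProbabilityTheory.IsGaussian.memLp_two_id.norm
  have hv := ProbabilityTheory.variance_nonneg (fun x : E => ‖x‖)
    (ProbabilityTheory.stdGaussian E)
  rw [ProbabilityTheory.variance_eq_sub hmem] at hv
  refine Real.le_sqrt_of_sq_le ?_
  have : ∫ x, ((fun x : E => ‖x‖) ^ 2) x ∂(ProbabilityTheory.stdGaussian E) =
    Module.finrank ℝ E := hsq
  linarith

end Gaussian

/-! ### The soft maximum -/

section SoftMax

variable {ι : Type*} [Fintype ι]

/-- The soft maximum `β⁻¹ log ∑ᵢ exp (β zᵢ)`. -/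
def softMax (β : ℝ) (z : ι → ℝ) : ℝ := Real.log (∑ i, Real.exp (β * z i)) / β

/-- The Gibbs weights `exp (β zᵢ) / ∑ⱼ exp (β zⱼ)`, i.e. the gradient of `softMax β`. -/
def gibbs (β : ℝ) (z : ι → ℝ) (i : ι) : ℝ := Real.exp (β * z i) / ∑ j, Real.exp (β * z j)

variable [Nonempty ι]

lemma sum_exp_pos (β : ℝ) (z : ι → ℝ) : 0 < ∑ i, Real.exp (β * z i) :=
  Finset.sum_pos (fun _ _ => Real.exp_pos _) Finset.univ_nonempty

lemma gibbs_nonneg (β : ℝ) (z : ι → ℝ) (i : ι) : 0 ≤ gibbs β z i :=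
  div_nonneg (Real.exp_pos _).le (sum_exp_pos β z).le

lemma sum_gibbs (β : ℝ) (z : ι → ℝ) : ∑ i, gibbs β z i = 1 := by
  simp only [gibbs, ← Finset.sum_div]
  exact div_self (sum_exp_pos β z).ne'

lemma gibbs_le_one (β : ℝ) (z : ι → ℝ) (i : ι) : gibbs β z i ≤ 1 := by
  rw [← sum_gibbs β z]
  exact Finset.single_le_sum (fun j _ => gibbs_nonneg β z j) (Finset.mem_univ i)

lemma continuous_gibbs (β : ℝ) (i : ι) : Continuous fun z : ι → ℝ => gibbs β z i := by
  unfold gibbs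
  exact Continuous.div (by fun_prop) (by fun_prop) fun z => (sum_exp_pos β z).ne'

lemma continuous_softMax (β : ℝ) : Continuous fun z : ι → ℝ => softMax β z := by
  unfold softMax
  exact (Continuous.log (by fun_prop) fun z => (sum_exp_pos β z).ne').div_const β

lemma le_softMax {β : ℝ} (hβ : 0 < β) (z : ι → ℝ) (i : ι) : z i ≤ softMax β z := by
  rw [softMax, le_div_iff₀ hβ, mul_comm, Real.le_log_iff_exp_le (sum_exp_pos β z)]
  exact Finset.single_le_sum (f := fun i => Real.exp (β * z i))
    (fun _ _ => (Real.exp_pos _).le) (Finset.mem_univ i)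

lemma softMax_le {β : ℝ} (hβ : 0 < β) {z : ι → ℝ} {m : ℝ} (h : ∀ i, z i ≤ m) :
    softMax β z ≤ m + Real.log (Fintype.card ι) / β := by
  have h1 : ∑ i, Real.exp (β * z i) ≤ Fintype.card ι * Real.exp (β * m) := by
    rw [← nsmul_eq_mul]
    refine Finset.sum_le_card_nsmul _ _ _ fun i _ => ?_
    exact Real.exp_le_exp.2 (mul_le_mul_of_nonneg_left (h i) hβ.le)
  have h2 := Real.log_le_log (sum_exp_pos β z) h1
  rw [Real.log_mul (by simp) (Real.exp_pos _).ne', Real.log_exp] at h2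
  rw [softMax, div_le_iff₀ hβ, add_mul, div_mul_cancel₀ _ hβ.ne']
  linarith

lemma hasDerivAt_softMax {β : ℝ} (hβ : 0 < β) {z : ℝ → ι → ℝ} {z' : ι → ℝ} {t : ℝ}
    (hz : ∀ i, HasDerivAt (fun s => z s i) (z' i) t) :
    HasDerivAt (fun s => softMax β (z s)) (∑ i, gibbs β (z t) i * z' i) t := by
  have h1 : HasDerivAt (fun s => ∑ i, Real.exp (β * z s i))
      (∑ i, Real.exp (β * z t i) * (β * z' i)) t :=
    HasDerivAt.fun_sum fun i _ => ((hz i).const_mul β).exp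
  refine ((h1.log (sum_exp_pos β _).ne').div_const β).congr_deriv ?_
  rw [Finset.sum_div, Finset.sum_div]
  refine Finset.sum_congr rfl fun i _ => ?_
  have := (sum_exp_pos β (z t)).ne'
  rw [gibbs]
  field_simp

lemma hasDerivAt_gibbs {β : ℝ} {z : ℝ → ι → ℝ} {z' : ι → ℝ} {t : ℝ}
    (hz : ∀ i, HasDerivAt (fun s => z s i) (z' i) t) (i : ι) :
    HasDerivAt (fun s => gibbs β (z s) i)
      (β * gibbs β (z t) i * (z' i - ∑ j, gibbs β (z t) j * z' j)) t := by
  have h1 : HasDerivAt (fun s => ∑ i, Real.exp (β * z s i))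
      (∑ i, Real.exp (β * z t i) * (β * z' i)) t :=
    HasDerivAt.fun_sum fun i _ => ((hz i).const_mul β).exp
  refine ((((hz i).const_mul β).exp).div h1 (sum_exp_pos β _).ne').congr_deriv ?_
  have h2 : ∑ j, Real.exp (β * z t j) * (β * z' j) =
      β * (∑ j, gibbs β (z t) j * z' j) * ∑ j, Real.exp (β * z t j) := by
    rw [Finset.mul_sum (f := fun j => gibbs β (z t) j * z' j), Finset.sum_mul]
    refine Finset.sum_congr rfl fun j _ => ?_
    have := (sum_exp_pos β (z t)).ne'
    rw [gibbs]
    field_simp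
  have := (sum_exp_pos β (z t)).ne'
  rw [h2]
  simp only [gibbs]
  field_simp

end SoftMax

/-! ### Sudakov–Fernique comparison -/

section Comparison

variable {ι : Type*} [Fintype ι] [Nonempty ι]
variable {E : Type*} [NormedAddCommGroup E] [InnerProductSpace ℝ E] [FiniteDimensional ℝ E]
  [MeasurableSpace E] [BorelSpace E]

lemma abs_softMax_le {β : ℝ} (hβ : 0 < β) (c : ι → E) (x : E) :
    |softMax β (fun i => inner ℝ (c i) x)| ≤
      Real.log (Fintype.card ι) / β + (∑ i, ‖c i‖) * ‖x‖ := by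
  have h0 (i : ι) : |inner ℝ (c i) x| ≤ (∑ i, ‖c i‖) * ‖x‖ :=
    (abs_real_inner_le_norm _ _).trans (mul_le_mul_of_nonneg_right
      (Finset.single_le_sum (f := fun i => ‖c i‖) (fun _ _ => norm_nonneg _) (Finset.mem_univ i))
      (norm_nonneg _))
  have hlog : 0 ≤ Real.log (Fintype.card ι) / β :=
    div_nonneg (Real.log_natCast_nonneg _) hβ.le
  rw [abs_le]
  constructor
  · have i : ι := Classical.arbitrary ι
    have := le_softMax hβ (fun i => inner ℝ (c i) x) i
    exact (abs_le.1 (h0 i)).1.trans' (by linarith) |>.trans this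
  · have := softMax_le hβ (z := fun i => inner ℝ (c i) x) fun i => (abs_le.1 (h0 i)).2
    linarith

lemma integrable_softMax {β : ℝ} (hβ : 0 < β) (c : ι → E) :
    Integrable (fun x => softMax β (fun i => inner ℝ (c i) x))
      (ProbabilityTheory.stdGaussian E) :=
  integrable_of_linear_growth ((continuous_softMax β).comp
    (f := fun (x : E) i => inner ℝ (c i) x) (by fun_prop)) (abs_softMax_le hβ c)

/-- A polarisation identity: a weighted variance is half a weighted double sum of increments. -/
lemma sum_sum_weights {p : ι → ℝ} (hp : ∑ i, p i = 1) (m : ι → ι → ℝ) :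
    ∑ i, ∑ j, p i * p j * (m i i - m i j - m j i + m j j) =
      2 * (∑ i, p i * m i i - ∑ i, ∑ j, p i * p j * m i j) := by
  have h1 : ∑ i, ∑ j, p i * p j * m i i = ∑ i, p i * m i i := by
    refine Finset.sum_congr rfl fun i _ => ?_
    rw [← Finset.sum_mul, ← Finset.mul_sum, hp, mul_one]
  have h2 : ∑ i, ∑ j, p i * p j * m j j = ∑ i, p i * m i i := by
    rw [Finset.sum_comm, ← h1]
    simp_rw [mul_comm (p _) (p _)]
  have h3 : ∑ i, ∑ j, p i * p j * m j i = ∑ i, ∑ j, p i * p j * m i j := by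
    rw [Finset.sum_comm]
    simp_rw [mul_comm (p _) (p _)]
  simp_rw [mul_add, mul_sub, Finset.sum_add_distrib, Finset.sum_sub_distrib, h1, h2, h3]
  ring

/-- The derivative of the interpolation, after Gaussian integration by parts. -/
lemma integral_gibbs_inner (β : ℝ) (c c' : ι → E) :
    ∫ x, ∑ i, gibbs β (fun i => inner ℝ (c i) x) i * inner ℝ (c' i) x
        ∂(ProbabilityTheory.stdGaussian E) =
      ∫ x, β / 2 * ∑ i, ∑ j, gibbs β (fun i => inner ℝ (c i) x) i *
        gibbs β (fun i => inner ℝ (c i) x) j * inner ℝ (c' i - c' j) (c i - c j)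
        ∂(ProbabilityTheory.stdGaussian E) := by
  have hcont (i : ι) : Continuous fun x : E => gibbs β (fun i => inner ℝ (c i) x) i :=
    (continuous_gibbs β i).comp (f := fun (x : E) i => inner ℝ (c i) x) (by fun_prop)
  have habs (x : E) (i : ι) : |gibbs β (fun i => inner ℝ (c i) x) i| ≤ 1 := by
    rw [abs_of_nonneg (gibbs_nonneg _ _ _)]; exact gibbs_le_one _ _ _
  have hI (i : ι) : Integrable (fun x => gibbs β (fun i => inner ℝ (c i) x) i * inner ℝ (c' i) x)
      (ProbabilityTheory.stdGaussian E) := by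
    refine integrable_of_linear_growth (C := 0) (D := ‖c' i‖)
      ((hcont i).mul (by fun_prop)) fun x => ?_
    rw [abs_mul, zero_add]
    exact (mul_le_of_le_one_left (abs_nonneg _) (habs x i)).trans (abs_real_inner_le_norm _ _)
  -- the derivative of the `i`-th Gibbs weight in the direction `c' i`
  let D (i : ι) (x : E) : ℝ := β * gibbs β (fun i => inner ℝ (c i) x) i *
    (inner ℝ (c i) (c' i) - ∑ j, gibbs β (fun i => inner ℝ (c i) x) j * inner ℝ (c j) (c' i))
  have hDcont (i : ι) : Continuous (D i) :=
    (continuous_const.mul (hcont i)).mul (continuous_const.sub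
      (continuous_finsetSum _ fun j _ => (hcont j).mul continuous_const))
  have hDb (i : ι) (x : E) : |D i x| ≤
      |β| * (|inner ℝ (c i) (c' i)| + ∑ j, |inner ℝ (c j) (c' i)|) := by
    simp only [D]
    rw [abs_mul, abs_mul]
    refine mul_le_mul (mul_le_of_le_one_right (abs_nonneg _) (habs x i)) ?_ (abs_nonneg _)
      (abs_nonneg _)
    refine (abs_sub _ _).trans (add_le_add le_rfl ((Finset.abs_sum_le_sum_abs _ _).trans ?_))
    refine Finset.sum_le_sum fun j _ => ?_
    rw [abs_mul]
    exact mul_le_of_le_one_left (abs_nonneg _) (habs x j)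
  have hibp (i : ι) := gaussian_integration_by_parts (c' i) (hcont i) (hDcont i)
    (fun x => habs x i) (hDb i) (fun x => by
      have := hasDerivAt_gibbs (β := β) (z := fun s k => inner ℝ (c k) (x + s • c' i)) (t := 0)
        (z' := fun j => inner ℝ (c j) (c' i)) (fun j => by
          simp only [inner_add_right, inner_smul_right]
          simpa using ((hasDerivAt_id (0 : ℝ)).mul_const (inner ℝ (c j) (c' i))).const_add
            (inner ℝ (c j) x)) i
      simpa [HasLineDerivAt, D] using this)
  rw [integral_finsetSum _ fun i _ => hI i]
  simp_rw [mul_comm (gibbs _ _ _) (inner ℝ (c' _) _)]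
  simp_rw [hibp]
  rw [← integral_finsetSum _ fun i _ => integrable_of_linear_growth (D := 0) (hDcont i)
    (by simpa using hDb i)]
  refine integral_congr_ae (.of_forall fun x => ?_)
  have hq := sum_sum_weights (sum_gibbs β (fun i => inner ℝ (c i) x))
    (fun i j => inner ℝ (c' i) (c j))
  have he (i j : ι) : inner ℝ (c' i - c' j) (c i - c j) = inner ℝ (c' i) (c i) -
      inner ℝ (c' i) (c j) - inner ℝ (c' j) (c i) + inner ℝ (c' j) (c j) := by
    simp only [inner_sub_left, inner_sub_right]; ring
  simp_rw [he]
  rw [hq]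
  simp only [D, mul_sub, Finset.mul_sum, Finset.sum_sub_distrib]
  congr 1
  · refine Finset.sum_congr rfl fun i _ => ?_
    rw [real_inner_comm]; ring
  · refine Finset.sum_congr rfl fun i _ => Finset.sum_congr rfl fun j _ => ?_
    rw [real_inner_comm]; ring

/-- Sudakov–Fernique for the soft maximum: if `‖aᵢ - aⱼ‖ ≤ ‖bᵢ - bⱼ‖` for all `i`, `j`, and the
families are orthogonal to each other, the expected soft maximum of `⟨cᵢ, G⟩` increases along the
path `cᵢ = cos t • aᵢ + sin t • bᵢ`. -/
lemma integral_softMax_le {β : ℝ} (hβ : 0 < β) (a b : ι → E)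
    (horth : ∀ i j, inner ℝ (a i) (b j) = 0) (hab : ∀ i j, ‖a i - a j‖ ^ 2 ≤ ‖b i - b j‖ ^ 2) :
    ∫ x, softMax β (fun i => inner ℝ (a i) x) ∂(ProbabilityTheory.stdGaussian E) ≤
      ∫ x, softMax β (fun i => inner ℝ (b i) x) ∂(ProbabilityTheory.stdGaussian E) := by
  let c (t : ℝ) (i : ι) : E := Real.cos t • a i + Real.sin t • b i
  let c' (t : ℝ) (i : ι) : E := -Real.sin t • a i + Real.cos t • b i
  let φ (t : ℝ) : ℝ := ∫ x, softMax β (fun i => inner ℝ (c t i) x) ∂(ProbabilityTheory.stdGaussian E)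
  have hc (t : ℝ) (i : ι) (x : E) :
      HasDerivAt (fun s => inner ℝ (c s i) x) (inner ℝ (c' t i) x) t := by
    simp only [c, c', inner_add_left, inner_smul_left, RCLike.conj_to_real]
    exact ((Real.hasDerivAt_cos t).mul_const _).add ((Real.hasDerivAt_sin t).mul_const _)
  have hc'b (t : ℝ) (i : ι) (x : E) : |inner ℝ (c' t i) x| ≤ (‖a i‖ + ‖b i‖) * ‖x‖ := by
    refine (abs_real_inner_le_norm _ _).trans (mul_le_mul_of_nonneg_right ?_ (norm_nonneg _))
    refine (norm_add_le _ _).trans (add_le_add ?_ ?_)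
    · rw [norm_smul, norm_neg]
      exact mul_le_of_le_one_left (norm_nonneg _) (Real.abs_sin_le_one t)
    · rw [norm_smul]
      exact mul_le_of_le_one_left (norm_nonneg _) (Real.abs_cos_le_one t)
  have hcontg (t : ℝ) : Continuous fun x : E =>
      ∑ i, gibbs β (fun i => inner ℝ (c t i) x) i * inner ℝ (c' t i) x := by
    refine continuous_finsetSum _ fun i _ => Continuous.mul ?_ (by fun_prop)
    exact (continuous_gibbs β i).comp (f := fun (x : E) i => inner ℝ (c t i) x) (by fun_prop)
  have hφ (t : ℝ) : HasDerivAt φ (∫ x, ∑ i, gibbs β (fun i => inner ℝ (c t i) x) i *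
      inner ℝ (c' t i) x ∂(ProbabilityTheory.stdGaussian E)) t := by
    refine (hasDerivAt_integral_of_dominated_loc_of_deriv_le
      (F := fun t x => softMax β (fun i => inner ℝ (c t i) x))
      (F' := fun t x => ∑ i, gibbs β (fun i => inner ℝ (c t i) x) i * inner ℝ (c' t i) x)
      (bound := fun x => (∑ i, (‖a i‖ + ‖b i‖)) * ‖x‖) Filter.univ_mem
      (.of_forall fun s => (integrable_softMax hβ (c s)).aestronglyMeasurable)
      (integrable_softMax hβ (c t)) (hcontg t).aestronglyMeasurable
      (.of_forall fun x s _ => ?_) (integrable_norm_stdGaussian.const_mul _)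
      (.of_forall fun x s _ => hasDerivAt_softMax hβ fun i => hc s i x)).2
    rw [Real.norm_eq_abs, Finset.sum_mul]
    refine (Finset.abs_sum_le_sum_abs _ _).trans (Finset.sum_le_sum fun i _ => ?_)
    rw [abs_mul, abs_of_nonneg (gibbs_nonneg _ _ _)]
    exact (mul_le_of_le_one_left (abs_nonneg _) (gibbs_le_one _ _ _)).trans (hc'b s i x)
  have hmono : MonotoneOn φ (Set.Icc 0 (π / 2)) := by
    refine monotoneOn_of_deriv_nonneg (convex_Icc _ _)
      (fun t _ => (hφ t).continuousAt.continuousWithinAt)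
      (fun t _ => (hφ t).differentiableAt.differentiableWithinAt) fun t ht => ?_
    rw [interior_Icc] at ht
    rw [(hφ t).deriv, integral_gibbs_inner]
    refine integral_nonneg fun x => mul_nonneg (by positivity) ?_
    refine Finset.sum_nonneg fun i _ => Finset.sum_nonneg fun j _ =>
      mul_nonneg (mul_nonneg (gibbs_nonneg _ _ _) (gibbs_nonneg _ _ _)) ?_
    have hsc : 0 ≤ Real.sin t * Real.cos t := mul_nonneg
      (Real.sin_nonneg_of_nonneg_of_le_pi ht.1.le (by linarith [ht.2, Real.pi_pos]))
      (Real.cos_nonneg_of_mem_Icc ⟨by linarith [ht.1, Real.pi_pos], ht.2.le⟩)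
    have hA : c' t i - c' t j = -Real.sin t • (a i - a j) + Real.cos t • (b i - b j) := by
      simp only [c', smul_sub]; abel
    have hB : c t i - c t j = Real.cos t • (a i - a j) + Real.sin t • (b i - b j) := by
      simp only [c, smul_sub]; abel
    have horth' : inner ℝ (a i - a j) (b i - b j) = 0 := by
      simp [inner_sub_left, inner_sub_right, horth]
    have heq : inner ℝ (c' t i - c' t j) (c t i - c t j) =
        Real.sin t * Real.cos t * (‖b i - b j‖ ^ 2 - ‖a i - a j‖ ^ 2) := by
      rw [hA, hB]
      simp only [inner_add_left, inner_add_right, real_inner_smul_left, real_inner_smul_right,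
        real_inner_self_eq_norm_sq, horth', real_inner_comm (a i - a j) (b i - b j)]
      ring
    rw [heq]
    exact mul_nonneg hsc (sub_nonneg.2 (hab i j))
  have hpi : 0 ≤ π / 2 := by positivity
  simpa [φ, c] using hmono (Set.left_mem_Icc.2 hpi) (Set.right_mem_Icc.2 hpi) hpi

end Comparison

/-! ### Gaussian and spherical means of homogeneous functions -/

section Polar

variable {E : Type*} [NormedAddCommGroup E] [InnerProductSpace ℝ E] [FiniteDimensional ℝ E]
  [MeasurableSpace E] [BorelSpace E] [Nontrivial E]

/-- Polar coordinates; the radial factor on the right does not depend on `F`. -/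
lemma integral_stdGaussian_polar (F : E → ℝ) (hF : ∀ r : ℝ, 0 < r → ∀ x, F (r • x) = r * F x) :
    ∫ x, F x ∂(ProbabilityTheory.stdGaussian E) =
      (∫ u : Metric.sphere (0 : E) 1, F u ∂(volume : Measure E).toSphere) *
      ∫ r : Set.Ioi (0 : ℝ), (2 * π) ^ (-(Module.finrank ℝ E : ℝ) / 2) *
        Real.exp (-(r : ℝ) ^ 2 / 2) * r ∂(Measure.volumeIoiPow (Module.finrank ℝ E - 1)) := by
  rw [integral_stdGaussian, ← integral_prod_mul]
  calc ∫ x : E, gaussDensity E x * F x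
      = ∫ x : ({(0)}ᶜ : Set E), gaussDensity E x.1 * F x.1
          ∂(volume.comap (Subtype.val : ({(0)}ᶜ : Set E) → E)) := by
        rw [integral_subtype_comap (measurableSet_singleton _).compl
          fun x : E => gaussDensity E x * F x, restrict_compl_singleton]
    _ = _ := by
        rw [← (volume : Measure E).measurePreserving_homeomorphUnitSphereProd.integral_comp
          (Homeomorph.measurableEmbedding _)]
        refine integral_congr_ae (.of_forall fun x => ?_)
        have hx : 0 < ‖(x : E)‖ := norm_pos_iff.2 x.2
        simp only [homeomorphUnitSphereProd_apply_snd_coe, homeomorphUnitSphereProd_apply_fst_coe,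
          gaussDensity]
        rw [hF _ (inv_pos.2 hx)]
        field_simp

/-- Since `F` and the norm share the radial factor in polar coordinates, the Gaussian mean of `F` is
`E ‖G‖` times its spherical mean. -/
lemma integral_stdGaussian_le_of_homogeneous (F : E → ℝ) (h0 : ∀ x, 0 ≤ F x)
    (hF : ∀ r : ℝ, 0 < r → ∀ x, F (r • x) = r * F x) :
    ∫ x, F x ∂(ProbabilityTheory.stdGaussian E) ≤ Real.sqrt (Module.finrank ℝ E) *
      ∫ u : Metric.sphere (0 : E) 1, F u ∂(((volume : Measure E).toSphere Set.univ)⁻¹ •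
        (volume : Measure E).toSphere) := by
  have h1 := integral_stdGaussian_polar F hF
  have h2 := integral_stdGaussian_polar (fun x : E => ‖x‖) fun r hr x => by
    rw [norm_smul, Real.norm_of_nonneg hr.le]
  have h3 := integral_norm_stdGaussian_le (E := E)
  rw [h2] at h3
  have hs : 0 < ((volume : Measure E).toSphere).real Set.univ :=
    ENNReal.toReal_pos (Measure.measure_univ_ne_zero.2 (Measure.toSphere_ne_zero _)) (measure_ne_top _ _)
  simp only [norm_eq_of_mem_sphere, integral_const, smul_eq_mul, mul_one] at h3
  rw [integral_smul_measure, h1, ENNReal.toReal_inv, smul_eq_mul]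
  change _ ≤ _ * ((((volume : Measure E).toSphere).real Set.univ)⁻¹ * _)
  have hI : 0 ≤ ∫ u : Metric.sphere (0 : E) 1, F u ∂(volume : Measure E).toSphere :=
    integral_nonneg fun u => h0 u
  rw [← le_div_iff₀' hs] at h3
  refine (mul_le_mul_of_nonneg_left h3 hI).trans (le_of_eq ?_)
  ring

end Polar

/-! ### The Gaussian matrix -/

section MatrixMeasure

lemma measurePreserving_curry (n : ℕ) :
    MeasurePreserving (MeasurableEquiv.curry (Fin n) (Fin n) ℝ) volume volume := by
  refine MeasurePreserving.symm (MeasurableEquiv.curry (Fin n) (Fin n) ℝ).symm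
    ⟨MeasurableEquiv.measurable _, ?_⟩
  symm
  refine Measure.pi_eq fun s hs => ?_
  rw [MeasurableEquiv.map_apply]
  have : (MeasurableEquiv.curry (Fin n) (Fin n) ℝ).symm ⁻¹' (Set.univ.pi s) =
      Set.univ.pi fun i => Set.univ.pi fun j => s (i, j) := by
    ext A
    simp [Set.mem_pi, Function.uncurry]
  rw [this, volume_pi_pi, Fintype.prod_prod_type]
  simp_rw [volume_pi_pi]

lemma integral_gaussianMatrixMeasure (n : ℕ) (F : (Fin n → Fin n → ℝ) → ℝ) :
    ∫ A, F A ∂(gaussianMatrixMeasure n) = ∫ G : EuclideanSpace ℝ (Fin n × Fin n),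
      F (fun i j => G (i, j)) ∂(ProbabilityTheory.stdGaussian _) := by
  rw [gaussianMatrixMeasure, integral_withDensity_eq_integral_toReal_smul
    (Measurable.ennreal_ofReal (by fun_prop)) (.of_forall fun x => by simp),
    integral_stdGaussian]
  have hmp := (measurePreserving_curry n).comp (PiLp.volume_preserving_ofLp (Fin n × Fin n))
  rw [← hmp.integral_comp ((MeasurableEquiv.measurableEmbedding _).comp
    (MeasurableEquiv.toLp 2 (Fin n × Fin n → ℝ)).symm.measurableEmbedding)]
  refine integral_congr_ae (.of_forall fun G => ?_)
  have hden : 0 ≤ (2 * π) ^ (-(n ^ 2 : ℝ) / 2) *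
      Real.exp (-(∑ i, ∑ j, (G (i, j)) ^ 2) / 2) := by positivity
  simp only [Function.comp_apply, MeasurableEquiv.coe_curry, Function.curry]
  rw [ENNReal.toReal_ofReal hden, gaussDensity, EuclideanSpace.real_norm_sq_eq,
    Fintype.sum_prod_type, finrank_euclideanSpace, smul_eq_mul]
  congr 3
  simp [sq]

end MatrixMeasure

section ProductSpace

variable {U V : Type*} [NormedAddCommGroup U] [InnerProductSpace ℝ U] [FiniteDimensional ℝ U]
  [MeasurableSpace U] [BorelSpace U] [NormedAddCommGroup V] [InnerProductSpace ℝ V]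
  [FiniteDimensional ℝ V] [MeasurableSpace V] [BorelSpace V]

lemma measurePreserving_fst_stdGaussian :
    MeasurePreserving (fun w : WithLp 2 (U × V) => w.fst)
      (ProbabilityTheory.stdGaussian _) (ProbabilityTheory.stdGaussian U) := by
  refine ⟨by fun_prop, ?_⟩
  let J : U →L[ℝ] WithLp 2 (U × V) :=
    (WithLp.prodContinuousLinearEquiv 2 ℝ U V).symm.toContinuousLinearMap.comp
      (ContinuousLinearMap.inl ℝ U V)
  let L : WithLp 2 (U × V) →L[ℝ] U := (ContinuousLinearMap.fst ℝ U V).comp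
    (WithLp.prodContinuousLinearEquiv 2 ℝ U V).toContinuousLinearMap
  exact stdGaussian_map_adjoint J L (fun y => by simp [J]) (fun x y => by simp [J, L])

lemma measurePreserving_snd_stdGaussian :
    MeasurePreserving (fun w : WithLp 2 (U × V) => w.snd)
      (ProbabilityTheory.stdGaussian _) (ProbabilityTheory.stdGaussian V) := by
  refine ⟨by fun_prop, ?_⟩
  let J : V →L[ℝ] WithLp 2 (U × V) :=
    (WithLp.prodContinuousLinearEquiv 2 ℝ U V).symm.toContinuousLinearMap.comp
      (ContinuousLinearMap.inr ℝ U V)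
  let L : WithLp 2 (U × V) →L[ℝ] V := (ContinuousLinearMap.snd ℝ U V).comp
    (WithLp.prodContinuousLinearEquiv 2 ℝ U V).toContinuousLinearMap
  exact stdGaussian_map_adjoint J L (fun y => by simp [J]) (fun x y => by simp [J, L])

end ProductSpace

/-! ### Rank-one matrices and the finite form of the inequality -/

section Finite

variable {n : ℕ}

/-- The rank-one matrix `y ⊗ x`, with entries `y i * x j`, as a vector of matrix entries. -/
def tens (x y : EuclideanSpace ℝ (Fin n)) : EuclideanSpace ℝ (Fin n × Fin n) :=
  WithLp.toLp 2 fun p => y p.1 * x p.2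

lemma norm_tens (x y : EuclideanSpace ℝ (Fin n)) : ‖tens x y‖ = ‖x‖ * ‖y‖ := by
  rw [← sq_eq_sq₀ (norm_nonneg _) (by positivity), mul_pow, EuclideanSpace.real_norm_sq_eq,
    EuclideanSpace.real_norm_sq_eq, EuclideanSpace.real_norm_sq_eq, Fintype.sum_prod_type,
    mul_comm, Finset.sum_mul_sum]
  simp [tens, mul_pow]

lemma tens_sub_tens (x y x' y' : EuclideanSpace ℝ (Fin n)) :
    tens x y - tens x' y' = tens x (y - y') + tens (x - x') y' := by
  ext p
  simp only [tens, PiLp.sub_apply, PiLp.add_apply]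
  ring

lemma norm_tens_sub_le (x y x' y' : EuclideanSpace ℝ (Fin n)) :
    ‖tens x y - tens x' y'‖ ≤ ‖x‖ * ‖y - y'‖ + ‖x - x'‖ * ‖y'‖ := by
  rw [tens_sub_tens, ← norm_tens, ← norm_tens]
  exact norm_add_le _ _

lemma inner_tens (x y : EuclideanSpace ℝ (Fin n)) (G : EuclideanSpace ℝ (Fin n × Fin n)) :
    inner ℝ (tens x y) G =
      inner ℝ y (Matrix.toEuclideanLin (Matrix.of fun i j => G (i, j)) x) := by
  simp only [PiLp.inner_apply, tens, Fintype.sum_prod_type, Matrix.toLpLin_apply,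
    Matrix.mulVec, dotProduct, Matrix.of_apply, RCLike.inner_apply, conj_trivial, Finset.sum_mul]
  refine Finset.sum_congr rfl fun i _ => Finset.sum_congr rfl fun j _ => ?_
  ring

/-- Chevet's inequality for finitely many rank-one functionals, obtained by comparing the process
`⟨y i, G (x i)⟩` with `2 R₁ ⟨y i, g⟩ + 2 R₂ ⟨x i, h⟩`, where `g` and `h` are independent. -/
lemma integral_softMax_tens_le {ι : Type*} [Fintype ι] [Nonempty ι] {β : ℝ} (hβ : 0 < β)
    (x y : ι → EuclideanSpace ℝ (Fin n)) {R₁ R₂ : ℝ} (hx : ∀ i, ‖x i‖ ≤ R₁)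
    (hy : ∀ i, ‖y i‖ ≤ R₂) {f₁ f₂ : EuclideanSpace ℝ (Fin n) → ℝ}
    (hf₁ : Integrable f₁ (ProbabilityTheory.stdGaussian _))
    (hf₂ : Integrable f₂ (ProbabilityTheory.stdGaussian _))
    (h₁ : ∀ i g, inner ℝ (y i) g ≤ f₁ g) (h₂ : ∀ i h, inner ℝ (x i) h ≤ f₂ h) :
    ∫ G, softMax β (fun i => inner ℝ (tens (x i) (y i)) G) ∂(ProbabilityTheory.stdGaussian _) ≤
      2 * R₁ * ∫ g, f₁ g ∂(ProbabilityTheory.stdGaussian _) +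
      2 * R₂ * ∫ h, f₂ h ∂(ProbabilityTheory.stdGaussian _) +
      Real.log (Fintype.card ι) / β := by
  obtain ⟨i₀⟩ := ‹Nonempty ι›
  have hR₁ : 0 ≤ R₁ := (norm_nonneg _).trans (hx i₀)
  have hR₂ : 0 ≤ R₂ := (norm_nonneg _).trans (hy i₀)
  have : Nonempty ι := ⟨i₀⟩
  let X := EuclideanSpace ℝ (Fin n)
  let M := EuclideanSpace ℝ (Fin n × Fin n)
  let a : ι → WithLp 2 (M × WithLp 2 (X × X)) := fun i => WithLp.toLp 2 (tens (x i) (y i), 0)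
  let c : ι → WithLp 2 (X × X) := fun i => WithLp.toLp 2 ((2 * R₁) • y i, (2 * R₂) • x i)
  let b : ι → WithLp 2 (M × WithLp 2 (X × X)) := fun i => WithLp.toLp 2 (0, c i)
  have horth : ∀ i j, inner ℝ (a i) (b j) = 0 := fun i j => by simp [a, b]
  have hab : ∀ i j, ‖a i - a j‖ ^ 2 ≤ ‖b i - b j‖ ^ 2 := fun i j => by
    have ea : ‖a i - a j‖ ^ 2 = ‖tens (x i) (y i) - tens (x j) (y j)‖ ^ 2 := by
      rw [WithLp.prod_norm_sq_eq_of_L2]; simp [a]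
    have eb : ‖b i - b j‖ ^ 2 =
        (2 * R₁ * ‖y i - y j‖) ^ 2 + (2 * R₂ * ‖x i - x j‖) ^ 2 := by
      rw [WithLp.prod_norm_sq_eq_of_L2]
      have : (b i - b j).snd = c i - c j := rfl
      rw [this, WithLp.prod_norm_sq_eq_of_L2]
      have t0 : (b i - b j).fst = 0 := sub_self _
      have t1 : (c i - c j).fst = (2 * R₁) • (y i - y j) := (smul_sub _ _ _).symm
      have t2 : (c i - c j).snd = (2 * R₂) • (x i - x j) := (smul_sub _ _ _).symm
      rw [t0, t1, t2, norm_smul, norm_smul, Real.norm_of_nonneg (by positivity),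
        Real.norm_of_nonneg (by positivity), norm_zero]
      ring
    rw [ea, eb]
    have h := norm_tens_sub_le (x i) (y i) (x j) (y j)
    have h' : ‖tens (x i) (y i) - tens (x j) (y j)‖ ≤ R₁ * ‖y i - y j‖ + R₂ * ‖x i - x j‖ := by
      refine h.trans ?_
      rw [mul_comm ‖x i - x j‖]
      gcongr
      · exact hx i
      · exact hy j
    refine (pow_le_pow_left₀ (norm_nonneg _) h' 2).trans ?_
    nlinarith [sq_nonneg (R₁ * ‖y i - y j‖ - R₂ * ‖x i - x j‖), sq_nonneg (R₁ * ‖y i - y j‖),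
      sq_nonneg (R₂ * ‖x i - x j‖)]
  have key := integral_softMax_le hβ a b horth hab
  have eA : ∫ G, softMax β (fun i => inner ℝ (tens (x i) (y i)) G)
      ∂(ProbabilityTheory.stdGaussian M) =
      ∫ w, softMax β (fun i => inner ℝ (a i) w) ∂(ProbabilityTheory.stdGaussian _) := by
    have hmp := measurePreserving_fst_stdGaussian (U := M) (V := WithLp 2 (X × X))
    have hcont : Continuous fun G : M => softMax β (fun i => inner ℝ (tens (x i) (y i)) G) :=
      (continuous_softMax β).comp (by fun_prop)
    rw [← hmp.map_eq, integral_map hmp.measurable.aemeasurable hcont.aestronglyMeasurable]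
    simp [a]
  have m1 : MeasurePreserving (fun w : WithLp 2 (M × WithLp 2 (X × X)) => w.snd.fst)
      (ProbabilityTheory.stdGaussian _) (ProbabilityTheory.stdGaussian X) :=
    measurePreserving_fst_stdGaussian.comp measurePreserving_snd_stdGaussian
  have m2 : MeasurePreserving (fun w : WithLp 2 (M × WithLp 2 (X × X)) => w.snd.snd)
      (ProbabilityTheory.stdGaussian _) (ProbabilityTheory.stdGaussian X) :=
    measurePreserving_snd_stdGaussian.comp measurePreserving_snd_stdGaussian
  have i1 : Integrable (fun w : WithLp 2 (M × WithLp 2 (X × X)) => f₁ w.snd.fst)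
      (ProbabilityTheory.stdGaussian _) := m1.integrable_comp_of_integrable hf₁
  have i2 : Integrable (fun w : WithLp 2 (M × WithLp 2 (X × X)) => f₂ w.snd.snd)
      (ProbabilityTheory.stdGaussian _) := m2.integrable_comp_of_integrable hf₂
  have e1 : ∫ w : WithLp 2 (M × WithLp 2 (X × X)), f₁ w.snd.fst
      ∂(ProbabilityTheory.stdGaussian _) = ∫ g, f₁ g ∂(ProbabilityTheory.stdGaussian X) := by
    rw [← m1.map_eq, integral_map m1.measurable.aemeasurable]
    rw [m1.map_eq]; exact hf₁.1
  have e2 : ∫ w : WithLp 2 (M × WithLp 2 (X × X)), f₂ w.snd.snd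
      ∂(ProbabilityTheory.stdGaussian _) = ∫ g, f₂ g ∂(ProbabilityTheory.stdGaussian X) := by
    rw [← m2.map_eq, integral_map m2.measurable.aemeasurable]
    rw [m2.map_eq]; exact hf₂.1
  rw [eA]
  refine key.trans ?_
  calc _ ≤ ∫ w : WithLp 2 (M × WithLp 2 (X × X)),
        (2 * R₁ * f₁ w.snd.fst + 2 * R₂ * f₂ w.snd.snd + Real.log (Fintype.card ι) / β)
          ∂(ProbabilityTheory.stdGaussian _) := by
        refine integral_mono (integrable_softMax hβ b)
          (((i1.const_mul _).add (i2.const_mul _)).add (integrable_const _)) fun w => ?_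
        refine softMax_le hβ fun i => ?_
        have : inner ℝ (b i) w =
            2 * R₁ * inner ℝ (y i) w.snd.fst + 2 * R₂ * inner ℝ (x i) w.snd.snd := by
          simp [b, c, inner_smul_left]
        rw [this]
        have := h₁ i w.snd.fst
        have := h₂ i w.snd.snd
        gcongr
    _ = _ := by
        have i12 : Integrable (fun w : WithLp 2 (M × WithLp 2 (X × X)) =>
            2 * R₁ * f₁ w.snd.fst + 2 * R₂ * f₂ w.snd.snd) (ProbabilityTheory.stdGaussian _) :=
          (i1.const_mul _).add (i2.const_mul _)
        rw [integral_add i12 (integrable_const _), integral_add (i1.const_mul _) (i2.const_mul _),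
          integral_const_mul, integral_const_mul,
          e1, e2]
        simp [X]

end Finite

/-! ### Gauges and polar bodies -/

section Bodies

variable {n : ℕ}

lemma inner_le_gauge {S : Set (EuclideanSpace ℝ (Fin n))} (hS : S ∈ nhds 0)
    {y : EuclideanSpace ℝ (Fin n)} (hy : ∀ s ∈ S, inner ℝ y s ≤ 1)
    (g : EuclideanSpace ℝ (Fin n)) : inner ℝ y g ≤ gauge S g := by
  refine le_of_forall_gt fun r hr => ?_
  obtain ⟨b, hb0, hbr, s, hs, rfl⟩ := exists_lt_of_gauge_lt (absorbent_nhds_zero hS) hr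
  simp only [inner_smul_right]
  nlinarith [hy s hs]

lemma integrable_gauge {S : Set (EuclideanSpace ℝ (Fin n))} (hc : Convex ℝ S)
    (hS : S ∈ nhds 0) : Integrable (gauge S) (ProbabilityTheory.stdGaussian _) := by
  obtain ⟨r, hr, hb⟩ := Metric.mem_nhds_iff.1 hS
  refine integrable_of_linear_growth (C := 0) (D := r⁻¹) (continuous_gauge hc hS) fun x => ?_
  rw [abs_of_nonneg (gauge_nonneg _), zero_add, inv_mul_eq_div, le_div_iff₀' hr]
  exact mul_gauge_le_norm hb

lemma integral_gauge_le (hn : 1 ≤ n) (S : Set (EuclideanSpace ℝ (Fin n))) :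
    ∫ g, gauge S g ∂(ProbabilityTheory.stdGaussian _) ≤ Real.sqrt n * Mparam n S := by
  have : Nonempty (Fin n) := ⟨⟨0, hn⟩⟩
  have h := integral_stdGaussian_le_of_homogeneous (gauge S) (fun x => gauge_nonneg _)
    fun r hr x => by rw [gauge_smul_of_nonneg hr.le, smul_eq_mul]
  rwa [finrank_euclideanSpace, Fintype.card_fin] at h

lemma convex_polarBody (K : Set (EuclideanSpace ℝ (Fin n))) : Convex ℝ (polarBody K) := by
  intro x hx y hy s t hs ht hst z hz
  rw [inner_add_left, real_inner_smul_left, real_inner_smul_left]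
  nlinarith [hx z hz, hy z hz]

lemma isCompact_polarBody {T : Set (EuclideanSpace ℝ (Fin n))} (hT : T ∈ nhds 0) :
    IsCompact (polarBody T) := by
  obtain ⟨r, hr, hb⟩ := Metric.nhds_basis_closedBall.mem_iff.1 hT
  refine Metric.isCompact_of_isClosed_isBounded ?_ ?_
  · have : polarBody T = ⋂ y ∈ T, {x | inner ℝ x y ≤ 1} := by
      ext; simp [polarBody]
    rw [this]
    exact isClosed_biInter fun y _ => isClosed_le (by fun_prop) (by fun_prop)
  · refine (Metric.isBounded_closedBall (x := 0) (r := r⁻¹)).subset fun y hy => ?_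
    rw [mem_closedBall_zero_iff]
    by_cases h0 : y = 0
    · simp [h0, hr.le]
    have hy0 : 0 < ‖y‖ := norm_pos_iff.2 h0
    have := hy ((r / ‖y‖) • y) (hb (by
      rw [mem_closedBall_zero_iff, norm_smul, Real.norm_of_nonneg (by positivity)]
      exact (div_mul_cancel₀ _ hy0.ne').le))
    rw [real_inner_smul_right, real_inner_self_eq_norm_sq] at this
    rw [← one_div, le_div_iff₀' hr]
    refine le_trans (le_of_eq ?_) this
    field_simp

lemma polarBody_mem_nhds {K : Set (EuclideanSpace ℝ (Fin n))} (hK : Bornology.IsBounded K) :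
    polarBody K ∈ nhds 0 := by
  obtain ⟨r, hr, hb⟩ := hK.exists_pos_norm_le
  refine Filter.mem_of_superset (Metric.ball_mem_nhds 0 (inv_pos.2 hr)) fun x hx y hy => ?_
  rw [mem_ball_zero_iff] at hx
  calc inner ℝ x y ≤ ‖x‖ * ‖y‖ := real_inner_le_norm _ _
    _ ≤ r⁻¹ * r := by gcongr; exact hb y hy
    _ = 1 := inv_mul_cancel₀ hr.ne'

lemma norm_le_Rparam {K : Set (EuclideanSpace ℝ (Fin n))} (hK : Bornology.IsBounded K)
    {x : EuclideanSpace ℝ (Fin n)} (hx : x ∈ K) : ‖x‖ ≤ Rparam K := by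
  obtain ⟨r, -, hb⟩ := hK.exists_pos_norm_le
  refine le_csSup ⟨r, ?_⟩ ⟨x, hx, rfl⟩
  rintro _ ⟨z, hz, rfl⟩
  exact hb z hz

/-- The gauge of `T` is dominated by the support function of `T°` (Hahn–Banach separation). -/
lemma exists_polar_gt {T : Set (EuclideanSpace ℝ (Fin n))} (hc : Convex ℝ T) (hcl : IsClosed T)
    (hT : T ∈ nhds 0) {z : EuclideanSpace ℝ (Fin n)} {r : ℝ} (hr : 0 < r)
    (hz : r < gauge T z) : ∃ y ∈ polarBody T, r < inner ℝ y z := by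
  have hnot : r⁻¹ • z ∉ T := fun h => by
    have := gauge_le_one_of_mem h
    rw [gauge_smul_of_nonneg (inv_nonneg.2 hr.le), smul_eq_mul, inv_mul_le_iff₀ hr, mul_one]
      at this
    linarith
  obtain ⟨f, u, hfT, hfz⟩ := geometric_hahn_banach_closed_point hc hcl hnot
  have hu : 0 < u := by simpa using hfT 0 (mem_of_mem_nhds hT)
  let v := (InnerProductSpace.toDual ℝ (EuclideanSpace ℝ (Fin n))).symm f
  have hv : ∀ w, inner ℝ v w = f w := fun w => InnerProductSpace.toDual_symm_apply
  refine ⟨u⁻¹ • v, fun t ht => ?_, ?_⟩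
  · rw [real_inner_smul_left, hv, inv_mul_le_iff₀ hu, mul_one]
    exact (hfT t ht).le
  · rw [real_inner_smul_left, hv, lt_inv_mul_iff₀ hu]
    rw [map_smul, smul_eq_mul, lt_inv_mul_iff₀ hr] at hfz
    linarith

/-- Discretisation: up to an error `ε (R₁ + R₂) ‖G‖`, the operator norm of the matrix `G` is a
maximum over `ε`-nets of `K` and `T°`. -/
lemma mapNorm_le_of_nets (hn : 1 ≤ n) {K T : Set (EuclideanSpace ℝ (Fin n))}
    (hKc : Convex ℝ K) (hKk : IsCompact K) (hK : K ∈ nhds 0)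
    (hTc : Convex ℝ T) (hTk : IsCompact T) (hT : T ∈ nhds 0)
    {N₁ N₂ : Set (EuclideanSpace ℝ (Fin n))} {R₁ R₂ ε m : ℝ}
    (hR₁ : ∀ x ∈ K, ‖x‖ ≤ R₁) (hR₂ : ∀ y ∈ polarBody T, ‖y‖ ≤ R₂)
    (hN₁' : ∀ x ∈ K, ∃ x' ∈ N₁, ‖x - x'‖ ≤ ε)
    (hN₂ : N₂ ⊆ polarBody T) (hN₂' : ∀ y ∈ polarBody T, ∃ y' ∈ N₂, ‖y - y'‖ ≤ ε)
    (G : EuclideanSpace ℝ (Fin n × Fin n))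
    (hm : ∀ x ∈ N₁, ∀ y ∈ N₂, inner ℝ (tens x y) G ≤ m) :
    mapNorm K T (Matrix.of fun i j => G (i, j)) ≤ m + ε * (R₁ + R₂) * ‖G‖ := by
  have : Nonempty (Fin n) := ⟨⟨0, hn⟩⟩
  have hpol0 : (0 : EuclideanSpace ℝ (Fin n)) ∈ polarBody T := fun t _ => by simp
  have hK0 : (0 : EuclideanSpace ℝ (Fin n)) ∈ K := mem_of_mem_nhds hK
  -- the bound on the nets extends to the bilinear form on `K × T°`
  have hbil : ∀ x ∈ K, ∀ y ∈ polarBody T,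
      inner ℝ (tens x y) G ≤ m + ε * (R₁ + R₂) * ‖G‖ := fun x hx y hy => by
    obtain ⟨x', hx', hxx⟩ := hN₁' x hx
    obtain ⟨y', hy', hyy⟩ := hN₂' y hy
    have h1 : inner ℝ (tens x y) G =
        inner ℝ (tens x' y') G + inner ℝ (tens x y - tens x' y') G := by
      rw [inner_sub_left]; ring
    have h2 : ‖tens x y - tens x' y'‖ ≤ ε * (R₁ + R₂) := by
      refine (norm_tens_sub_le x y x' y').trans ?_
      have a1 := hR₁ x hx
      have a2 := hR₂ y' (hN₂ hy')
      have hε : 0 ≤ ε := (norm_nonneg _).trans hxx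
      nlinarith [mul_le_mul a1 hyy (norm_nonneg _) ((norm_nonneg _).trans a1),
        mul_le_mul hxx a2 (norm_nonneg _) hε]
    rw [h1]
    refine add_le_add (hm x' hx' y' hy') ((real_inner_le_norm _ _).trans ?_)
    gcongr
  have hnn : 0 ≤ m + ε * (R₁ + R₂) * ‖G‖ := by
    simpa [inner_tens] using hbil 0 hK0 0 hpol0
  have hvN : Bornology.IsVonNBounded ℝ K := NormedSpace.isVonNBounded_of_isBounded _ hKk.isBounded
  refine Real.sSup_le ?_ hnn
  rintro _ ⟨x, hx0, rfl⟩
  have hg : 0 < gauge K x := (gauge_pos (absorbent_nhds_zero hK) hvN).2 hx0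
  have hxK : (gauge K x)⁻¹ • x ∈ K := by
    have h := gauge_le_one_iff_mem_closure (x := (gauge K x)⁻¹ • x) hKc hK
    rw [hKk.isClosed.closure_eq] at h
    rw [← h, gauge_smul_of_nonneg (inv_nonneg.2 hg.le), smul_eq_mul, inv_mul_cancel₀ hg.ne']
  rw [div_eq_inv_mul, ← smul_eq_mul, ← gauge_smul_of_nonneg (inv_nonneg.2 hg.le), ← map_smul]
  by_contra! hlt
  obtain ⟨r, hr1, hr2⟩ := exists_between hlt
  obtain ⟨y, hy, hyr⟩ := exists_polar_gt hTc hTk.isClosed hT (hnn.trans_lt hr1) hr2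
  rw [← inner_tens] at hyr
  exact absurd (hbil _ hxK y hy) (not_le.2 (hr1.trans hyr))

lemma exists_finite_net {K : Set (EuclideanSpace ℝ (Fin n))} (hK : IsCompact K) {ε : ℝ}
    (hε : 0 < ε) : ∃ N ⊆ K, N.Finite ∧ ∀ x ∈ K, ∃ x' ∈ N, ‖x - x'‖ ≤ ε := by
  obtain ⟨N, hN, hfin, hcov⟩ := hK.finite_cover_balls hε
  refine ⟨N, hN, hfin, fun x hx => ?_⟩
  obtain ⟨x', hx', hb⟩ := Set.mem_iUnion₂.1 (hcov hx)
  exact ⟨x', hx', by rw [← dist_eq_norm]; exact (Metric.mem_ball.1 hb).le⟩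

/-- Chevet's inequality with Gaussian means of the gauges in place of spherical ones. No
measurability of `mapNorm` is needed: it is non-negative and has an integrable majorant. -/
lemma integral_mapNorm_le (hn : 1 ≤ n) {K T : Set (EuclideanSpace ℝ (Fin n))}
    (hKc : Convex ℝ K) (hKk : IsCompact K) (hK : K ∈ nhds 0)
    (hTc : Convex ℝ T) (hTk : IsCompact T) (hT : T ∈ nhds 0) :
    ∫ A, mapNorm K T (Matrix.of A) ∂(gaussianMatrixMeasure n) ≤
      2 * Rparam K * ∫ g, gauge T g ∂(ProbabilityTheory.stdGaussian _) +
      2 * Rparam (polarBody T) * ∫ g, gauge (polarBody K) g ∂(ProbabilityTheory.stdGaussian _) := by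
  rw [integral_gaussianMatrixMeasure]
  have hPk := isCompact_polarBody hT
  have hPK := polarBody_mem_nhds hKk.isBounded
  have hR₁ : ∀ x ∈ K, ‖x‖ ≤ Rparam K := fun x hx => norm_le_Rparam hKk.isBounded hx
  have hR₂ : ∀ y ∈ polarBody T, ‖y‖ ≤ Rparam (polarBody T) := fun y hy =>
    norm_le_Rparam hPk.isBounded hy
  have hK0 : (0 : EuclideanSpace ℝ (Fin n)) ∈ K := mem_of_mem_nhds hK
  have hP0 : (0 : EuclideanSpace ℝ (Fin n)) ∈ polarBody T := fun t _ => by simp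
  have hR₁0 : 0 ≤ Rparam K := (norm_nonneg _).trans (hR₁ 0 hK0)
  have hR₂0 : 0 ≤ Rparam (polarBody T) := (norm_nonneg _).trans (hR₂ 0 hP0)
  set D := ∫ G : EuclideanSpace ℝ (Fin n × Fin n), ‖G‖ ∂(ProbabilityTheory.stdGaussian _)
  have hD : 0 ≤ D := integral_nonneg fun _ => norm_nonneg _
  refine le_of_forall_pos_le_add fun δ hδ => ?_
  set S := (Rparam K + Rparam (polarBody T)) * D with hS
  have hS0 : 0 ≤ S := by positivity
  -- the net scale makes the discretisation error at most `δ / 2`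
  set ε := δ / (2 * (S + 1)) with hε
  have hε0 : 0 < ε := by positivity
  have hεS : ε * S ≤ δ / 2 := by
    rw [hε, div_mul_eq_mul_div, div_le_div_iff₀ (by positivity) (by positivity)]
    nlinarith
  obtain ⟨N₁, hN₁, hf₁, hN₁'⟩ := exists_finite_net hKk hε0
  obtain ⟨N₂, hN₂, hf₂, hN₂'⟩ := exists_finite_net hPk hε0
  have : Fintype N₁ := hf₁.fintype
  have : Fintype N₂ := hf₂.fintype
  obtain ⟨z₁, hz₁, -⟩ := hN₁' 0 hK0
  obtain ⟨z₂, hz₂, -⟩ := hN₂' 0 hP0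
  have : Nonempty (N₁ × N₂) := ⟨(⟨z₁, hz₁⟩, ⟨z₂, hz₂⟩)⟩
  set l := Real.log (Fintype.card (N₁ × N₂)) with hl
  have hl0 : 0 ≤ l := Real.log_natCast_nonneg _
  -- the inverse temperature makes the entropy term at most `δ / 2`
  set β := 2 * (l + 1) / δ with hβ
  have hβ0 : 0 < β := by positivity
  have hlβ : l / β ≤ δ / 2 := by
    rw [hβ, div_div_eq_mul_div, div_le_div_iff₀ (by positivity) (by positivity)]
    nlinarith
  let x : N₁ × N₂ → EuclideanSpace ℝ (Fin n) := fun p => p.1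
  let y : N₁ × N₂ → EuclideanSpace ℝ (Fin n) := fun p => p.2
  have hfin := integral_softMax_tens_le hβ0 x y (fun p => hR₁ _ (hN₁ p.1.2))
    (fun p => hR₂ _ (hN₂ p.2.2)) (integrable_gauge hTc hT)
    (integrable_gauge (convex_polarBody K) hPK)
    (fun p g => inner_le_gauge hT (hN₂ p.2.2) g)
    (fun p h => inner_le_gauge hPK (fun s hs => by
      rw [real_inner_comm]; exact hs _ (hN₁ p.1.2)) h)
  have hsm := integrable_softMax hβ0 fun p => tens (x p) (y p)
  have hno : Integrable (fun G : EuclideanSpace ℝ (Fin n × Fin n) =>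
      ε * (Rparam K + Rparam (polarBody T)) * ‖G‖) (ProbabilityTheory.stdGaussian _) :=
    integrable_norm_stdGaussian.const_mul _
  calc _ ≤ ∫ G : EuclideanSpace ℝ (Fin n × Fin n),
        (softMax β (fun p => inner ℝ (tens (x p) (y p)) G) +
          ε * (Rparam K + Rparam (polarBody T)) * ‖G‖) ∂(ProbabilityTheory.stdGaussian _) := by
        refine integral_mono_of_nonneg (.of_forall fun G => ?_) (hsm.add hno)
          (.of_forall fun G => ?_)
        · refine Real.sSup_nonneg ?_
          rintro _ ⟨x, -, rfl⟩
          exact div_nonneg (gauge_nonneg _) (gauge_nonneg _)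
        · exact mapNorm_le_of_nets hn hKc hKk hK hTc hTk hT hR₁ hR₂ hN₁' hN₂ hN₂' G
            fun u hu v hv => le_softMax hβ0
              (fun p => inner ℝ (tens (x p) (y p)) G) ((⟨u, hu⟩, ⟨v, hv⟩) : N₁ × N₂)
    _ ≤ _ := by
        rw [integral_add hsm hno, integral_const_mul]
        have : ε * (Rparam K + Rparam (polarBody T)) * D = ε * S := by rw [hS]; ring
        linarith

end Bodies

/-- **Chevet's inequality**:
`E ‖Γ : K → T‖ ≤ C √n (R(K) M(T) + R(T°) M(K°))` for a standard Gaussian matrix `Γ`. -/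
theorem chevet_inequality :
    ∃ C : ℝ, 0 < C ∧
      ∀ n : ℕ, 1 ≤ n → ∀ K T : Set (EuclideanSpace ℝ (Fin n)),
        IsConvexBody K → IsConvexBody T → 0 ∈ interior K → 0 ∈ interior T →
        ∫ A, mapNorm K T (Matrix.of A) ∂(gaussianMatrixMeasure n) ≤
          C * Real.sqrt n *
            (Rparam K * Mparam n T + Rparam (polarBody T) * Mparam n (polarBody K)) := by
  refine ⟨2, two_pos, fun n hn K T hK hT hK0 hT0 => ?_⟩
  rw [mem_interior_iff_mem_nhds] at hK0 hT0
  have h := integral_mapNorm_le hn hK.2.1 hK.1 hK0 hT.2.1 hT.1 hT0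
  have hR₁ : 0 ≤ Rparam K :=
    (norm_nonneg _).trans (norm_le_Rparam hK.1.isBounded (mem_of_mem_nhds hK0))
  have hR₂ : 0 ≤ Rparam (polarBody T) := (norm_nonneg _).trans
    (norm_le_Rparam (isCompact_polarBody hT0).isBounded
      (x := 0) fun t _ => by simp)
  have h₁ := mul_le_mul_of_nonneg_left (integral_gauge_le hn T) hR₁
  have h₂ := mul_le_mul_of_nonneg_left (integral_gauge_le hn (polarBody K)) hR₂
  linarith

end
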